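/- Let (M, W) admit a precofibration category structure (so W satisfies 2-out-of-3 and contains all isomorphisms). Then the following are equivalent: (1) W is weakly saturated (satisfies 2-out-of-3, contains identities, and for i, r with r∘i = id and i∘r ∈ W one has i, r ∈ W); (2) W satisfies the 2-out-of-6 property; (3) W is closed under retracts; (4) W is saturated, i.e. W equals the class of maps becoming isomorphisms in the localization M[W⁻¹]. -/

import Mathlib

open CategoryTheory CategoryTheory.Limits

universe w v u

variable (C : Type u) [Category.{v} C] [HasInitial C]

/-- An Anderson–Brown–Cisinski precofibration category structure on `C`:
classes of weak equivalences `W` and cofibrations `Cof` satisfying the axioms CF1–CF4. -/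
structure PrecofCat where
  /-- the class of weak equivalences -/
  W : MorphismProperty C
  /-- the class of cofibrations -/
  Cof : MorphismProperty C
  /-- CF1: cofibrations are closed under composition -/
  cof_comp : ∀ {X Y Z : C} (f : X ⟶ Y) (g : Y ⟶ Z), Cof f → Cof g → Cof (f ≫ g)
  /-- CF1: the initial object is cofibrant -/
  initial_cofibrant : Cof (initial.to (⊥_ C))
  /-- CF1: isomorphisms are weak equivalences -/
  iso_W : ∀ {X Y : C} (f : X ⟶ Y), IsIso f → W f
  /-- CF1: isomorphisms with cofibrant domain are cofibrations -/
  iso_cof : ∀ {X Y : C} (f : X ⟶ Y), IsIso f → Cof (initial.to X) → Cof f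
  /-- CF2: two-out-of-three -/
  W_comp : ∀ {X Y Z : C} (f : X ⟶ Y) (g : Y ⟶ Z), W f → W g → W (f ≫ g)
  W_cancel_left : ∀ {X Y Z : C} (f : X ⟶ Y) (g : Y ⟶ Z), W f → W (f ≫ g) → W g
  W_cancel_right : ∀ {X Y Z : C} (f : X ⟶ Y) (g : Y ⟶ Z), W g → W (f ≫ g) → W f
  /-- CF3: pushouts of cofibrations with cofibrant corners exist -/
  pushout_exists : ∀ {A B X : C} (i : A ⟶ B) (f : A ⟶ X), Cof i →
      Cof (initial.to A) → Cof (initial.to X) →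
      ∃ (D : C) (g : B ⟶ D) (j : X ⟶ D), IsPushout i f g j
  /-- CF3: the pushout of a cofibration is a cofibration -/
  pushout_cof : ∀ {A B X D : C} (i : A ⟶ B) (f : A ⟶ X) (g : B ⟶ D) (j : X ⟶ D),
      Cof i → Cof (initial.to A) → Cof (initial.to X) → IsPushout i f g j → Cof j
  /-- CF3: the pushout of a trivial cofibration is a trivial cofibration -/
  pushout_triv_cof : ∀ {A B X D : C} (i : A ⟶ B) (f : A ⟶ X) (g : B ⟶ D) (j : X ⟶ D),
      Cof i → W i → Cof (initial.to A) → Cof (initial.to X) → IsPushout i f g j → W j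
  /-- CF4: factorization of maps with cofibrant domain -/
  factorization : ∀ {A B : C} (f : A ⟶ B), Cof (initial.to A) →
      ∃ (Z : C) (f' : A ⟶ Z) (r : Z ⟶ B), Cof f' ∧ W r ∧ f' ≫ r = f

variable {C}

/-- An object is cofibrant if the map from the initial object is a cofibration. -/
def PrecofCat.Cofibrant (P : PrecofCat C) (A : C) : Prop :=
  P.Cof (initial.to A)

/-- `f` is a retract of `g` in the arrow category. -/
def RetractOf {A B X Y : C} (f : A ⟶ B) (g : X ⟶ Y) : Prop :=
  ∃ (iA : A ⟶ X) (rA : X ⟶ A) (iB : B ⟶ Y) (rB : Y ⟶ B),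
    iA ≫ rA = 𝟙 A ∧ iB ≫ rB = 𝟙 B ∧ iA ≫ g = f ≫ iB ∧ g ≫ rB = rA ≫ f

/-! Weak saturation gives 2-out-of-6 by a pushout argument between cofibrant objects, and saturation
gives closure under retracts because isomorphisms are closed under retracts. The main point is that
2-out-of-6 gives saturation. For a cofibrant object `A`, call two maps out of `A` equivalent if they
are connected by postcompositions with weak equivalences between cofibrant objects. The set of
classes is a presheaf on cofibrant objects which inverts trivial cofibrations (push out), hence all
weak equivalences (K. Brown's lemma), and it extends to the whole category through cofibrant
replacements. If `f : A ⟶ B` becomes invertible in the localization, restriction along `f` is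
therefore bijective on classes, and a preimage `g` of the class of `𝟙 A` is a map such that `f ≫ g`
is a weak equivalence. Applying this twice puts `f` into a 2-out-of-6 situation. -/

section SaturationConditions

variable {𝒞 : Type*} [Category* 𝒞]

lemma RetractOf.nonempty_retractArrow {A B X Y : 𝒞} {f : A ⟶ B} {g : X ⟶ Y}
    (h : RetractOf f g) : Nonempty (RetractArrow f g) := by
  obtain ⟨iA, rA, iB, rB, hA, hB, hi, hr⟩ := h
  exact ⟨⟨Arrow.homMk iA iB hi, Arrow.homMk rA rB hr.symm, by ext <;> assumption⟩⟩

lemma retractOf_comp_of_comp_eq_id {X Y : 𝒞} {i : X ⟶ Y} {r : Y ⟶ X} (h : i ≫ r = 𝟙 X) :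
    RetractOf i (r ≫ i) :=
  ⟨i, r, 𝟙 Y, 𝟙 Y, h, by simp, by simp [reassoc_of% h], by simp⟩

/-- Weak saturation of a class of maps: it contains identities, has the 2-out-of-3 property, and
contains every section–retraction pair whose idempotent it contains. -/
def WeaklySaturated (W : MorphismProperty 𝒞) : Prop :=
  (∀ X : 𝒞, W (𝟙 X)) ∧
  (∀ (X Y Z : 𝒞) (f : X ⟶ Y) (g : Y ⟶ Z),
    (W f → W g → W (f ≫ g)) ∧ (W f → W (f ≫ g) → W g) ∧ (W g → W (f ≫ g) → W f)) ∧
  (∀ (X Y : 𝒞) (i : X ⟶ Y) (r : Y ⟶ X), i ≫ r = 𝟙 X → W (r ≫ i) → W i ∧ W r)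

/-- The 2-out-of-6 property of a class of maps. -/
def TwoOutOfSix (W : MorphismProperty 𝒞) : Prop :=
  ∀ (X Y Z T : 𝒞) (f : X ⟶ Y) (g : Y ⟶ Z) (h : Z ⟶ T),
    W (f ≫ g) → W (g ≫ h) → W f ∧ W g ∧ W h ∧ W (f ≫ g ≫ h)

/-- Closure of a class of maps under retracts, in terms of `RetractOf`. -/
def ClosedUnderRetracts (W : MorphismProperty 𝒞) : Prop :=
  ∀ (A B X Y : 𝒞) (f : A ⟶ B) (g : X ⟶ Y), RetractOf f g → W g → W f

/-- A class of maps is saturated if it consists of the maps inverted by its localization. -/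
def Saturated (W : MorphismProperty 𝒞) : Prop :=
  ∀ (X Y : 𝒞) (f : X ⟶ Y), W f ↔ IsIso (W.Q.map f)

lemma Saturated.closedUnderRetracts {W : MorphismProperty 𝒞} (hW : Saturated W) :
    ClosedUnderRetracts W := by
  intro A B X Y f g hfg hg
  obtain ⟨h⟩ := hfg.nonempty_retractArrow
  exact (hW _ _ f).2 (((MorphismProperty.isomorphisms _).inverseImage W.Q).of_retract h
    ((hW _ _ g).1 hg))

lemma ClosedUnderRetracts.weaklySaturated {W : MorphismProperty 𝒞} [W.ContainsIdentities]
    [W.HasTwoOutOfThreeProperty] (hW : ClosedUnderRetracts W) : WeaklySaturated W := by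
  refine ⟨W.id_mem, fun X Y Z f g => ⟨W.comp_mem f g, W.of_precomp f g, W.of_postcomp f g⟩,
    fun X Y i r hir hri => ?_⟩
  have hi : W i := hW _ _ _ _ _ _ (retractOf_comp_of_comp_eq_id hir) hri
  exact ⟨hi, W.of_postcomp r i hi hri⟩

end SaturationConditions

section MapClass

variable {𝒞 : Type u} [Category.{v} 𝒞] (W : MorphismProperty 𝒞)

/-- A map with source `X` is related to its composites with maps in `W`. -/
def PostcompRel {X : 𝒞} (x y : Σ E : 𝒞, X ⟶ E) : Prop :=
  ∃ t : x.1 ⟶ y.1, W t ∧ x.2 ≫ t = y.2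

/-- The maps with source `X`, up to zigzags of postcompositions with maps in `W`. -/
def MapClass (X : 𝒞) : Type (max u v) := Quot (PostcompRel W (X := X))

namespace MapClass

/-- The class of a map. -/
def mk {X E : 𝒞} (u : X ⟶ E) : MapClass W X := Quot.mk _ ⟨E, u⟩

variable {W}

lemma exists_mk_eq {X : 𝒞} (x : MapClass W X) : ∃ (E : 𝒞) (u : X ⟶ E), mk W u = x := by
  obtain ⟨⟨E, u⟩, rfl⟩ := Quot.exists_rep x
  exact ⟨E, u, rfl⟩

lemma mk_comp {X E E' : 𝒞} (u : X ⟶ E) {t : E ⟶ E'} (ht : W t) : mk W (u ≫ t) = mk W u :=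
  (Quot.sound ⟨t, ht, rfl⟩).symm

lemma mem_iff_of_mk_eq [W.HasTwoOutOfThreeProperty] {X E E' : 𝒞} {u : X ⟶ E} {u' : X ⟶ E'}
    (h : mk W u = mk W u') : W u ↔ W u' := by
  have rel_iff (x y : Σ E : 𝒞, X ⟶ E) : PostcompRel W x y → W x.2 = W y.2 := by
    rintro ⟨t, ht, hxy⟩
    rw [← hxy, W.postcomp_iff _ _ ht]
  exact iff_of_eq (congrArg (Quot.lift (fun x : Σ E : 𝒞, X ⟶ E => W x.2) rel_iff) h)

/-- Precomposition of classes of maps. -/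
def precomp {X Y : 𝒞} (f : X ⟶ Y) : MapClass W Y → MapClass W X :=
  Quot.map (fun y => ⟨y.1, f ≫ y.2⟩) fun _ _ ⟨t, ht, h⟩ => ⟨t, ht, by simp [h]⟩

@[simp]
lemma precomp_mk {X Y E : 𝒞} (f : X ⟶ Y) (u : Y ⟶ E) : precomp f (mk W u) = mk W (f ≫ u) := rfl

variable (W) in
/-- Classes of maps modulo `W` form a presheaf. -/
def presheaf : 𝒞ᵒᵖ ⥤ Type (max u v) where
  obj X := MapClass W X.unop
  map f := ↾(precomp f.unop)
  map_id X := by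
    ext x
    obtain ⟨E, u, rfl⟩ := exists_mk_eq x
    simp
  map_comp f g := by
    ext x
    obtain ⟨E, u, rfl⟩ := exists_mk_eq x
    simp

lemma mk_eq_of_isPushout [W.HasOfPrecompProperty W] {X Y E D : 𝒞} {i : X ⟶ Y} {u : X ⟶ E}
    {g : Y ⟶ D} {j : E ⟶ D} (sq : IsPushout i u g j) (hj : W j) {E' : 𝒞} {g' : Y ⟶ E'}
    {j' : E ⟶ E'} (hj' : W j') (comm : i ≫ g' = u ≫ j') : mk W g = mk W g' := by
  have hd : W (sq.desc g' j' comm) := W.of_precomp j _ hj (by simpa using hj')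
  simpa using (mk_comp g hd).symm

lemma precomp_bijective [W.IsMultiplicative] [W.HasOfPrecompProperty W] {X Y : 𝒞} {i : X ⟶ Y}
    (hi : ∀ {E : 𝒞} (u : X ⟶ E), ∃ (D : 𝒞) (g : Y ⟶ D) (j : E ⟶ D), IsPushout i u g j ∧ W j) :
    Function.Bijective (precomp (W := W) i) := by
  choose D g j sq hj using @hi
  let extend : MapClass W X → MapClass W Y := Quot.lift (fun x => mk W (g x.2)) <| by
    rintro ⟨E, u⟩ ⟨E', u'⟩ ⟨t, ht, h⟩
    dsimp only at t h
    subst h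
    exact mk_eq_of_isPushout (sq u) (hj u) (W.comp_mem t _ ht (hj (u ≫ t)))
      (by simpa using (sq (u ≫ t)).w)
  refine Function.bijective_iff_has_inverse.2 ⟨extend, fun y => ?_, fun x => ?_⟩
  · obtain ⟨E, v, rfl⟩ := exists_mk_eq y
    exact mk_eq_of_isPushout (sq (i ≫ v)) (hj _) (W.id_mem E) (by simp)
  · obtain ⟨E, u, rfl⟩ := exists_mk_eq x
    exact (congrArg (mk W) (sq u).w).trans (mk_comp u (hj u))

end MapClass

end MapClass

namespace PrecofCat

variable (P : PrecofCat C)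

instance : P.W.IsMultiplicative where
  id_mem X := P.iso_W (𝟙 X) inferInstance
  comp_mem := P.W_comp

instance : P.W.HasTwoOutOfThreeProperty where
  comp_mem := P.W_comp
  of_postcomp := P.W_cancel_right
  of_precomp := P.W_cancel_left

/-- The full subcategory of cofibrant objects. -/
abbrev CofObj : Type u := ObjectProperty.FullSubcategory (fun A => P.Cofibrant A)

/-- The weak equivalences between cofibrant objects. -/
abbrev cofW : MorphismProperty P.CofObj := P.W.inverseImage (ObjectProperty.ι _)

section CofibrantObjects

variable {P}

lemma Cofibrant.of_cof {A B : C} (hA : P.Cofibrant A) {i : A ⟶ B} (hi : P.Cof i) :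
    P.Cofibrant B := by
  simpa [Cofibrant] using P.cof_comp _ _ hA hi

lemma exists_cof_factorization {A : P.CofObj} {X : C} (f : A.obj ⟶ X) :
    ∃ (Z : P.CofObj) (i : A ⟶ Z) (r : Z.obj ⟶ X), P.Cof i.hom ∧ P.W r ∧ i.hom ≫ r = f := by
  obtain ⟨Z, i, r, hi, hr, fac⟩ := P.factorization f A.property
  exact ⟨⟨Z, A.property.of_cof hi⟩, ObjectProperty.homMk i, r, hi, hr, fac⟩

variable (P) in
lemma exists_cofibrant_replacement (X : C) : ∃ (R : P.CofObj) (r : R.obj ⟶ X), P.W r := by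
  obtain ⟨R, -, r, -, hr, -⟩ :=
    exists_cof_factorization (A := ⟨⊥_ C, P.initial_cofibrant⟩) (initial.to X)
  exact ⟨R, r, hr⟩

lemma exists_isPushout {A B X : P.CofObj} {i : A ⟶ B} (hi : P.Cof i.hom) (f : A ⟶ X) :
    ∃ (D : P.CofObj) (g : B ⟶ D) (j : X ⟶ D), IsPushout i.hom f.hom g.hom j.hom ∧
      P.Cof j.hom ∧ (P.W i.hom → P.W j.hom) := by
  obtain ⟨D, g, j, sq⟩ := P.pushout_exists i.hom f.hom hi A.property X.property
  have hj : P.Cof j := P.pushout_cof _ _ _ _ hi A.property X.property sq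
  exact ⟨⟨D, X.property.of_cof hj⟩, ObjectProperty.homMk g, ObjectProperty.homMk j, sq, hj,
    fun hiW => P.pushout_triv_cof _ _ _ _ hi hiW A.property X.property sq⟩

lemma exists_isPushout_initial (A B : P.CofObj) :
    ∃ (S : P.CofObj) (inl : A ⟶ S) (inr : B ⟶ S),
      IsPushout (initial.to A.obj) (initial.to B.obj) inl.hom inr.hom ∧
        P.Cof inl.hom ∧ P.Cof inr.hom := by
  obtain ⟨S, inl, inr, sq, hinr, -⟩ := exists_isPushout (A := ⟨⊥_ C, P.initial_cofibrant⟩)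
    (i := ObjectProperty.homMk (initial.to A.obj)) A.property
    (ObjectProperty.homMk (initial.to B.obj))
  exact ⟨S, inl, inr, sq,
    P.pushout_cof _ _ _ _ B.property P.initial_cofibrant A.property sq.flip, hinr⟩

/-- A factorization of `p : A ⟶ X` and `r : B ⟶ X` through a common weak equivalence `T ⟶ X`
with `T` cofibrant. -/
structure CospanOver {A B : P.CofObj} {X : C} (p : A.obj ⟶ X) (r : B.obj ⟶ X) where
  T : P.CofObj
  a : A ⟶ T
  b : B ⟶ T
  t : T.obj ⟶ X
  t_mem : P.W t
  a_t : a.hom ≫ t = p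
  b_t : b.hom ≫ t = r

attribute [simp] CospanOver.a_t CospanOver.b_t

lemma exists_cospanOver_cof {A B : P.CofObj} {X : C} (p : A.obj ⟶ X) (r : B.obj ⟶ X) :
    ∃ σ : CospanOver p r, P.Cof σ.a.hom ∧ P.Cof σ.b.hom := by
  obtain ⟨S, inl, inr, sq, hinl, hinr⟩ := exists_isPushout_initial A B
  obtain ⟨Z, c, q, hc, hq, fac⟩ :=
    exists_cof_factorization (sq.desc p r (initialIsInitial.hom_ext _ _))
  exact ⟨⟨Z, inl ≫ c, inr ≫ c, q, hq, by simp [fac], by simp [fac]⟩,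
    P.cof_comp _ _ hinl hc, P.cof_comp _ _ hinr hc⟩

lemma CospanOver.b_mem {A B : P.CofObj} {X : C} {p : A.obj ⟶ X} {r : B.obj ⟶ X}
    (σ : CospanOver p r) (hr : P.W r) : P.cofW σ.b :=
  P.W_cancel_right _ _ σ.t_mem (σ.b_t.symm ▸ hr)

lemma CospanOver.exists_zigzag {A B : P.CofObj} {X : C} {p : A.obj ⟶ X} {r : B.obj ⟶ X}
    (σ τ : CospanOver p r) :
    ∃ (Z V : P.CofObj) (a : A ⟶ Z) (b : B ⟶ Z) (z : Z ⟶ σ.T) (e : Z ⟶ V) (e' : τ.T ⟶ V),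
      P.cofW z ∧ P.cofW e' ∧ a ≫ z = σ.a ∧ b ≫ z = σ.b ∧
      a ≫ e = τ.a ≫ e' ∧ b ≫ e = τ.b ≫ e' := by
  obtain ⟨S, inl, inr, cop, -, -⟩ := exists_isPushout_initial A B
  obtain ⟨Z, c, z, hc, hz, hcz⟩ :=
    exists_cof_factorization (cop.desc σ.a.hom σ.b.hom (initialIsInitial.hom_ext _ _))
  let d : S ⟶ τ.T :=
    ObjectProperty.homMk (cop.desc τ.a.hom τ.b.hom (initialIsInitial.hom_ext _ _))
  obtain ⟨D, g, j, sq, -, -⟩ := exists_isPushout hc d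
  have comm : c.hom ≫ z ≫ σ.t = d.hom ≫ τ.t := by
    rw [reassoc_of% hcz]
    exact cop.hom_ext (by simp [d]) (by simp [d])
  obtain ⟨V, i, o, -, ho, fac⟩ := exists_cof_factorization (sq.desc (z ≫ σ.t) τ.t comm)
  have hjo : (j ≫ i).hom ≫ o = τ.t := by simp [fac]
  refine ⟨Z, V, inl ≫ c, inr ≫ c, ObjectProperty.homMk z, g ≫ i, j ≫ i, hz,
    P.W_cancel_right _ _ ho (hjo ▸ τ.t_mem), ?_, ?_, ?_, ?_⟩ <;> ext
  · simp [hcz]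
  · simp [hcz]
  · simp [sq.w_assoc, d]
  · simp [sq.w_assoc, d]

end CofibrantObjects

section Replacement

/-- A chosen cofibrant replacement. -/
noncomputable def replacement (X : C) : P.CofObj := (P.exists_cofibrant_replacement X).choose

/-- The weak equivalence from the chosen cofibrant replacement. -/
noncomputable def replacementMap (X : C) : (P.replacement X).obj ⟶ X :=
  (P.exists_cofibrant_replacement X).choose_spec.choose

lemma replacementMap_mem (X : C) : P.W (P.replacementMap X) :=
  (P.exists_cofibrant_replacement X).choose_spec.choose_spec

end Replacement

section LeftDerived

variable {P} {D : Type*} [Category* D] {F : P.CofObj ⥤ D}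

/-- K. Brown's lemma. -/
lemma isInvertedBy_cofW_of_isIso_map
    (hF : ∀ {A B : P.CofObj} (i : A ⟶ B), P.Cof i.hom → P.W i.hom → IsIso (F.map i)) :
    P.cofW.IsInvertedBy F := by
  intro A B w hw
  obtain ⟨σ, ha, hb⟩ := exists_cospanOver_cof w.hom (𝟙 B.obj)
  let t : σ.T ⟶ B := ObjectProperty.homMk σ.t
  have hat : σ.a ≫ t = w := by ext; exact σ.a_t
  have hbt : σ.b ≫ t = 𝟙 B := by ext; exact σ.b_t
  have : IsIso (F.map σ.a) := hF σ.a ha (P.W_cancel_right _ _ σ.t_mem (σ.a_t.symm ▸ hw))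
  have : IsIso (F.map σ.b) := hF σ.b hb (σ.b_mem (P.W.id_mem _))
  have : IsIso (F.map t) := by
    have : IsIso (F.map σ.b ≫ F.map t) := by
      rw [← F.map_comp, hbt, F.map_id]
      infer_instance
    exact IsIso.of_isIso_comp_left (F.map σ.b) _
  rw [← hat, F.map_comp]
  infer_instance

lemma CospanOver.comp_map_b (hF : P.cofW.IsInvertedBy F) {A B : P.CofObj} {X : C}
    {p : A.obj ⟶ X} {r : B.obj ⟶ X} (σ τ : CospanOver p r) {φ : F.obj A ⟶ F.obj B}
    (h : φ ≫ F.map σ.b = F.map σ.a) :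
    φ ≫ F.map τ.b = F.map τ.a := by
  obtain ⟨Z, V, a, b, z, e, e', hz, he', haz, hbz, hae, hbe⟩ := σ.exists_zigzag τ
  have := hF z hz
  have := hF e' he'
  have hab : φ ≫ F.map b = F.map a := by
    rw [← cancel_mono (F.map z), Category.assoc, ← F.map_comp, ← F.map_comp, haz, hbz, h]
  rw [← cancel_mono (F.map e'), Category.assoc, ← F.map_comp, ← F.map_comp, ← hae, ← hbe,
    F.map_comp, F.map_comp, reassoc_of% hab]

lemma exists_comp_map_b (hF : P.cofW.IsInvertedBy F) {A B : P.CofObj} {X : C} (p : A.obj ⟶ X)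
    {r : B.obj ⟶ X} (hr : P.W r) :
    ∃ φ : F.obj A ⟶ F.obj B, ∀ σ : CospanOver p r, φ ≫ F.map σ.b = F.map σ.a := by
  obtain ⟨τ, -, -⟩ := exists_cospanOver_cof p r
  have := hF τ.b (τ.b_mem hr)
  exact ⟨F.map τ.a ≫ inv (F.map τ.b), fun σ => τ.comp_map_b hF σ (by simp)⟩

section DerivedMap

variable (hF : P.cofW.IsInvertedBy F) {A B : P.CofObj} {X : C}

/-- The map `F A ⟶ F B` which a functor `F` inverting weak equivalences assigns to the formal
composite of `p : A ⟶ X` with the inverse of a weak equivalence `r : B ⟶ X`. Here `A` and `B` are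
cofibrant, but `X` need not be. -/
noncomputable def derivedMap (p : A.obj ⟶ X) {r : B.obj ⟶ X} (hr : P.W r) : F.obj A ⟶ F.obj B :=
  (exists_comp_map_b hF p hr).choose

lemma derivedMap_comp_map_b {p : A.obj ⟶ X} {r : B.obj ⟶ X} (hr : P.W r) (σ : CospanOver p r) :
    derivedMap hF p hr ≫ F.map σ.b = F.map σ.a :=
  (exists_comp_map_b hF p hr).choose_spec σ

lemma eq_derivedMap {p : A.obj ⟶ X} {r : B.obj ⟶ X} (hr : P.W r) (σ : CospanOver p r)
    {φ : F.obj A ⟶ F.obj B} (h : φ ≫ F.map σ.b = F.map σ.a) : φ = derivedMap hF p hr := by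
  have := hF σ.b (σ.b_mem hr)
  rw [← cancel_mono (F.map σ.b), h, derivedMap_comp_map_b]

lemma derivedMap_self {r : B.obj ⟶ X} (hr : P.W r) : derivedMap hF r hr = 𝟙 (F.obj B) :=
  (eq_derivedMap hF hr ⟨B, 𝟙 B, 𝟙 B, r, hr, by simp, by simp⟩ (by simp)).symm

lemma derivedMap_comp {E : P.CofObj} {Y : C} (p : A.obj ⟶ X) {r : B.obj ⟶ X} (hr : P.W r)
    (f : X ⟶ Y) {s : E.obj ⟶ Y} (hs : P.W s) :
    derivedMap hF p hr ≫ derivedMap hF (r ≫ f) hs = derivedMap hF (p ≫ f) hs := by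
  obtain ⟨σ, -, -⟩ := exists_cospanOver_cof p r
  obtain ⟨ρ, -, -⟩ := exists_cospanOver_cof (σ.t ≫ f) s
  let ρr : CospanOver (r ≫ f) s := ⟨ρ.T, σ.b ≫ ρ.a, ρ.b, ρ.t, ρ.t_mem,
    by simp [reassoc_of% σ.b_t], ρ.b_t⟩
  let ρp : CospanOver (p ≫ f) s := ⟨ρ.T, σ.a ≫ ρ.a, ρ.b, ρ.t, ρ.t_mem,
    by simp [reassoc_of% σ.a_t], ρ.b_t⟩
  apply eq_derivedMap hF hs ρp
  have h : derivedMap hF (r ≫ f) hs ≫ F.map ρ.b = F.map σ.b ≫ F.map ρ.a := by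
    rw [← F.map_comp]
    exact derivedMap_comp_map_b hF hs ρr
  change _ ≫ F.map ρ.b = F.map (σ.a ≫ ρ.a)
  rw [Category.assoc, h, ← Category.assoc, derivedMap_comp_map_b, F.map_comp]

lemma derivedMap_trans {E : P.CofObj} (p : A.obj ⟶ X) {r : B.obj ⟶ X} (hr : P.W r)
    {s : E.obj ⟶ X} (hs : P.W s) :
    derivedMap hF p hr ≫ derivedMap hF r hs = derivedMap hF p hs := by
  simpa using derivedMap_comp hF p hr (𝟙 X) hs

lemma isIso_derivedMap {p : A.obj ⟶ X} {r : B.obj ⟶ X} (hp : P.W p) (hr : P.W r) :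
    IsIso (derivedMap hF p hr) :=
  ⟨derivedMap hF r hp, by rw [derivedMap_trans, derivedMap_self],
    by rw [derivedMap_trans, derivedMap_self]⟩

lemma map_eq_derivedMap (f : A ⟶ B) : F.map f = derivedMap hF f.hom (P.W.id_mem B.obj) :=
  eq_derivedMap hF _ ⟨B, f, 𝟙 B, 𝟙 _, P.W.id_mem _, by simp, by simp⟩ (by simp)

lemma derivedMap_comp_map {E : P.CofObj} (p : E.obj ⟶ A.obj) (f : A ⟶ B) :
    derivedMap hF p (P.W.id_mem A.obj) ≫ F.map f =
      derivedMap hF (p ≫ f.hom) (P.W.id_mem B.obj) := by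
  rw [map_eq_derivedMap hF f]
  simpa using derivedMap_comp hF p (P.W.id_mem A.obj) f.hom (P.W.id_mem B.obj)

/-- The left derived functor of a functor which inverts the weak equivalences between cofibrant
objects: it evaluates the functor on cofibrant replacements. -/
noncomputable def leftDerived : C ⥤ D where
  obj X := F.obj (P.replacement X)
  map {X Y} f := derivedMap hF (P.replacementMap X ≫ f) (P.replacementMap_mem Y)
  map_id X := by simpa using derivedMap_self hF (P.replacementMap_mem X)
  map_comp f g := by
    rw [derivedMap_comp, Category.assoc]

lemma isInvertedBy_leftDerived : P.W.IsInvertedBy (leftDerived hF) := fun X _ _ hf =>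
  isIso_derivedMap hF (P.W_comp _ _ (P.replacementMap_mem X) hf) (P.replacementMap_mem _)

/-- On cofibrant objects the left derived functor agrees with the original one. -/
noncomputable def leftDerivedIso : ObjectProperty.ι _ ⋙ leftDerived hF ≅ F :=
  NatIso.ofComponents (fun A =>
    have := isIso_derivedMap hF (P.replacementMap_mem A.obj) (P.W.id_mem A.obj)
    (asIso (derivedMap hF (P.replacementMap A.obj) (P.W.id_mem A.obj)) :
      F.obj (P.replacement A.obj) ≅ F.obj A)) fun {A B} f =>
    (derivedMap_trans hF _ (P.replacementMap_mem B.obj) _).trans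
      (derivedMap_comp_map hF (P.replacementMap A.obj) f).symm

end DerivedMap

lemma isIso_map_of_isIso_Q_map (hF : P.cofW.IsInvertedBy F) {A B : P.CofObj} (f : A ⟶ B)
    (hf : IsIso (P.W.Q.map f.hom)) :
    IsIso (F.map f) := by
  let G := Localization.lift (leftDerived hF) (isInvertedBy_leftDerived hF) P.W.Q
  let e : (ObjectProperty.ι _ ⋙ P.W.Q) ⋙ G ≅ F :=
    Functor.associator .. ≪≫ Functor.isoWhiskerLeft _ (Localization.fac ..) ≪≫ leftDerivedIso hF
  rw [← NatIso.isIso_map_iff e]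
  exact inferInstanceAs (IsIso (G.map (P.W.Q.map f.hom)))

end LeftDerived

section MapsInvertedByLocalization

variable {P}

lemma isInvertedBy_mapClass_presheaf_rightOp :
    P.cofW.IsInvertedBy (MapClass.presheaf P.cofW).rightOp := by
  refine isInvertedBy_cofW_of_isIso_map fun {A B} i hi hiW => ?_
  have hbij : Function.Bijective (MapClass.precomp (W := P.cofW) i) :=
    MapClass.precomp_bijective fun u => by
      obtain ⟨D, g, j, sq, -, hj⟩ := exists_isPushout hi u
      exact ⟨D, g, j, .of_map_of_faithful (ObjectProperty.ι _) sq, hj hiW⟩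
  have : IsIso ((MapClass.presheaf P.cofW).map i.op) := (isIso_iff_bijective _).2 hbij
  exact inferInstanceAs (IsIso ((MapClass.presheaf P.cofW).map i.op).op)

lemma exists_comp_mem_of_isIso_Q_map {A B : P.CofObj} {f : A ⟶ B}
    (hf : IsIso (P.W.Q.map f.hom)) : ∃ (E : P.CofObj) (g : B ⟶ E), P.cofW (f ≫ g) := by
  have : IsIso ((MapClass.presheaf P.cofW).map f.op).op :=
    isIso_map_of_isIso_Q_map isInvertedBy_mapClass_presheaf_rightOp f hf
  have : IsIso ((MapClass.presheaf P.cofW).map f.op) := isIso_of_op _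
  obtain ⟨y, hy⟩ := ((isIso_iff_bijective _).1 this).2 (MapClass.mk P.cofW (𝟙 A))
  obtain ⟨E, g, rfl⟩ := MapClass.exists_mk_eq y
  exact ⟨E, g, (MapClass.mem_iff_of_mk_eq hy).2 (P.cofW.id_mem A)⟩

end MapsInvertedByLocalization

section Implications

variable {P}

/-- If `D` is the pushout of `f ≫ g` along `f`, then `g` is a trivial cofibration `j` into `D`
followed by a retraction `r` of `k : Z ⟶ D`. The idempotent `r ≫ k` is a weak equivalence because it
is absorbed by the weak equivalence `p : D ⟶ T`. -/
lemma mem_of_weaklySaturated_of_cof (hP : WeaklySaturated P.W) {X Y Z : P.CofObj} {T : C}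
    {f : X ⟶ Y} {g : Y ⟶ Z} {h : Z.obj ⟶ T} (hfg_cof : P.Cof (f ≫ g).hom)
    (hfg : P.W (f ≫ g).hom) (hgh : P.W (g.hom ≫ h)) : P.W g.hom := by
  obtain ⟨D, k, j, sq, -, hj⟩ := exists_isPushout hfg_cof f
  have hjW : P.W j.hom := hj hfg
  let p : D.obj ⟶ T := sq.desc h (g.hom ≫ h) (by simp)
  let r : D.obj ⟶ Z.obj := sq.desc (𝟙 Z.obj) g.hom (by simp)
  have hkr : k.hom ≫ r = 𝟙 Z.obj := sq.inl_desc ..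
  have hjr : j.hom ≫ r = g.hom := sq.inr_desc ..
  have hp : P.W p := P.W_cancel_left j.hom p hjW (by simpa [p] using hgh)
  have hrkp : (r ≫ k.hom) ≫ p = p := by
    apply sq.hom_ext
    · simp [reassoc_of% hkr]
    · simp [reassoc_of% hjr, p]
  have hrk : P.W (r ≫ k.hom) := P.W_cancel_right _ p hp (hrkp.symm ▸ hp)
  exact hjr ▸ P.W_comp _ _ hjW (hP.2.2 _ _ k.hom r hkr hrk).2

lemma twoOutOfSix_of_weaklySaturated (hP : WeaklySaturated P.W) : TwoOutOfSix P.W := by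
  intro X Y Z T f g h hfg hgh
  obtain ⟨X', x, hx⟩ := P.exists_cofibrant_replacement X
  obtain ⟨Y', f', y, hf', hy, hf⟩ := exists_cof_factorization (x ≫ f)
  obtain ⟨Z', g', z, hg', hz, hg⟩ := exists_cof_factorization (y ≫ g)
  have hfg' : P.W (f' ≫ g').hom := by
    refine P.W_cancel_right _ z hz ?_
    have : (f' ≫ g').hom ≫ z = x ≫ f ≫ g := by simp [hg, reassoc_of% hf]
    exact this ▸ P.W_comp _ _ hx hfg
  have hgh' : P.W (g'.hom ≫ z ≫ h) := by
    rw [reassoc_of% hg]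
    exact P.W_comp _ _ hy hgh
  have hg'W : P.W g'.hom :=
    mem_of_weaklySaturated_of_cof hP (P.cof_comp _ _ hf' hg') hfg' hgh'
  have hgW : P.W g := P.W_cancel_left y g hy (hg ▸ P.W_comp _ _ hg'W hz)
  have hfW : P.W f := P.W_cancel_right f g hgW hfg
  exact ⟨hfW, hgW, P.W_cancel_left g h hgW hgh, P.W_comp _ _ hfW hgh⟩

lemma mem_of_twoOutOfSix_of_isIso_Q_map (hP : TwoOutOfSix P.W) {A B : P.CofObj} {f : A ⟶ B}
    (hf : IsIso (P.W.Q.map f.hom)) : P.W f.hom := by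
  obtain ⟨E, g, hfg⟩ := exists_comp_mem_of_isIso_Q_map hf
  have hg : IsIso (P.W.Q.map g.hom) := by
    have : IsIso (P.W.Q.map f.hom ≫ P.W.Q.map g.hom) := by
      rw [← Functor.map_comp]
      exact Localization.inverts P.W.Q P.W _ hfg
    exact IsIso.of_isIso_comp_left (P.W.Q.map f.hom) _
  obtain ⟨E', h, hgh⟩ := exists_comp_mem_of_isIso_Q_map hg
  exact (hP _ _ _ _ f.hom g.hom h.hom hfg hgh).1

lemma saturated_of_twoOutOfSix (hP : TwoOutOfSix P.W) : Saturated P.W := by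
  refine fun X Y f => ⟨fun hf => Localization.inverts P.W.Q P.W f hf, fun hf => ?_⟩
  obtain ⟨X', x, hx⟩ := P.exists_cofibrant_replacement X
  obtain ⟨Y', f', y, -, hy, fac⟩ := exists_cof_factorization (x ≫ f)
  have := Localization.inverts P.W.Q P.W x hx
  have := Localization.inverts P.W.Q P.W y hy
  have hQf' : IsIso (P.W.Q.map f'.hom) := by
    have : IsIso (P.W.Q.map f'.hom ≫ P.W.Q.map y) := by
      rw [← Functor.map_comp, fac, Functor.map_comp]
      infer_instance
    exact IsIso.of_isIso_comp_right _ (P.W.Q.map y)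
  have hf' : P.W f'.hom := mem_of_twoOutOfSix_of_isIso_Q_map hP hQf'
  exact P.W_cancel_left x f hx (fac ▸ P.W_comp _ _ hf' hy)

end Implications

end PrecofCat

/-- For a category pair admitting a precofibration structure, the following are
equivalent: (1) the weak equivalences are weakly saturated; (2) they satisfy the
2-out-of-6 property; (3) they are closed under retracts; (4) they are saturated, i.e.
a map is a weak equivalence iff it becomes an isomorphism in the localization. -/
theorem saturation_tfae (P : PrecofCat C) :
    List.TFAE
      [ -- (1) weak saturation
        (∀ X : C, P.W (𝟙 X)) ∧
        (∀ (X Y Z : C) (f : X ⟶ Y) (g : Y ⟶ Z),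
          (P.W f → P.W g → P.W (f ≫ g)) ∧ (P.W f → P.W (f ≫ g) → P.W g) ∧
          (P.W g → P.W (f ≫ g) → P.W f)) ∧
        (∀ (X Y : C) (i : X ⟶ Y) (r : Y ⟶ X),
          i ≫ r = 𝟙 X → P.W (r ≫ i) → P.W i ∧ P.W r),
        -- (2) the 2-out-of-6 property
        ∀ (X Y Z T : C) (f : X ⟶ Y) (g : Y ⟶ Z) (h : Z ⟶ T),
          P.W (f ≫ g) → P.W (g ≫ h) →
          P.W f ∧ P.W g ∧ P.W h ∧ P.W (f ≫ g ≫ h),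
        -- (3) closure under retracts
        ∀ (A B X Y : C) (f : A ⟶ B) (g : X ⟶ Y), RetractOf f g → P.W g → P.W f,
        -- (4) saturation
        ∀ (X Y : C) (f : X ⟶ Y), P.W f ↔ IsIso (P.W.Q.map f) ] := by
  tfae_have 1 → 2 := PrecofCat.twoOutOfSix_of_weaklySaturated
  tfae_have 2 → 4 := PrecofCat.saturated_of_twoOutOfSix
  tfae_have 4 → 3 := Saturated.closedUnderRetracts
  tfae_have 3 → 1 := ClosedUnderRetracts.weaklySaturated
  tfae_finish
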